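/- arXiv:2501.13212 — 2 statements merged into one kernel-verified Lean document; each statement's English description precedes it below -/
import Mathlib

section
/- Let 0 < ε ≤ 1/2. Over the noiseless-feedback rewrite channel with crossover ε, let U be any finite-valued random variable, let X₁ ∈ {0,1} be a (possibly randomized) function of U, and let X₂ ∈ {no-rewrite, 0, 1} be a (possibly randomized) function of (U, X₁, Y₁), with all local randomness independent of the channel noises E₁, E₂. Then for every u with P(U = u) > 0, ε² ≤ P(Y₂ = 1 | U = u) ≤ 1 − ε². Consequently, if P(Y₂ = 1) = ε, then I(U; Y₂) ≤ h_b(ε) − h_b(ε²). -/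
open Classical

noncomputable def pOf {Ω α : Type*} [Fintype Ω] (μ : Ω → ℝ) (X : Ω → α) (x : α) : ℝ :=
  ∑ ω, if X ω = x then μ ω else 0

noncomputable def pr {Ω : Type*} [Fintype Ω] (μ : Ω → ℝ) (E : Ω → Prop) : ℝ :=
  ∑ ω, if E ω then μ ω else 0

noncomputable def KL {α : Type*} [Fintype α] (p q : α → ℝ) : ℝ :=
  ∑ x, p x * Real.logb 2 (p x / q x)

noncomputable def TV {α : Type*} [Fintype α] (p q : α → ℝ) : ℝ :=
  (∑ x, |p x - q x|) / 2

noncomputable def Hent {Ω α : Type*} [Fintype Ω] [Fintype α] (μ : Ω → ℝ) (X : Ω → α) : ℝ :=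
  -∑ x, pOf μ X x * Real.logb 2 (pOf μ X x)

noncomputable def condH {Ω α β : Type*} [Fintype Ω] [Fintype α] [Fintype β]
    (μ : Ω → ℝ) (X : Ω → α) (Y : Ω → β) : ℝ :=
  Hent μ (fun ω => (X ω, Y ω)) - Hent μ Y

noncomputable def Iinfo {Ω α β : Type*} [Fintype Ω] [Fintype α] [Fintype β]
    (μ : Ω → ℝ) (X : Ω → α) (Y : Ω → β) : ℝ :=
  Hent μ X + Hent μ Y - Hent μ (fun ω => (X ω, Y ω))

noncomputable def hb (p : ℝ) : ℝ :=
  -(p * Real.logb 2 p) - (1 - p) * Real.logb 2 (1 - p)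

noncomputable def bern (p : ℝ) : Bool → ℝ := fun b => if b then p else 1 - p

open Classical in
theorem info_bound {Ω 𝒰 : Type*} [Fintype Ω] [Fintype 𝒰] (μ : Ω → ℝ) (V : Ω → 𝒰) (Y : Ω → Bool)
    (hμ : ∀ ω, 0 ≤ μ ω) (hs : ∑ ω, μ ω = 1) (δ ε : ℝ) (hδ : 0 < δ) (hδ1 : δ ≤ 1 / 2)
    (hb1 : ∀ u, δ * pr μ (fun ω => V ω = u) ≤ pr μ (fun ω => Y ω = true ∧ V ω = u))
    (hb2 : ∀ u, pr μ (fun ω => Y ω = true ∧ V ω = u) ≤ (1 - δ) * pr μ (fun ω => V ω = u))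
    (hY : pr μ (fun ω => Y ω = true) = ε) : Iinfo μ V Y ≤ hb ε - hb δ := by
  have hbE : ∀ p, hb p = Real.binEntropy p / Real.log 2 := by
    intro p
    simp only [hb, Real.binEntropy_eq_negMulLog_add_negMulLog_one_sub, Real.negMulLog, Real.logb]
    ring
  have hmono : ∀ q, δ ≤ q → q ≤ 1 - δ → hb δ ≤ hb q := by
    intro q h1 h2
    rw [hbE, hbE]
    have : 0 < Real.log 2 := Real.log_pos (by norm_num)
    gcongr
    rcases le_total q (1/2) with h | h
    · exact Real.binEntropy_strictMonoOn.monotoneOn ⟨hδ.le, by norm_num at *; linarith⟩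
        ⟨by linarith, by norm_num at *; linarith⟩ h1
    · rw [← Real.binEntropy_one_sub q]
      exact Real.binEntropy_strictMonoOn.monotoneOn ⟨hδ.le, by norm_num at *; linarith⟩
        ⟨by linarith, by norm_num at *; linarith⟩ (by linarith)
  have hVsum : ∑ u, pOf μ V u = 1 := by
    unfold pOf
    rw [Finset.sum_comm]
    simp [hs]
  have hT : pOf μ Y true = ε := hY
  have hF : pOf μ Y false = 1 - ε := by
    rw [← hT, ← hs]
    unfold pOf
    rw [← Finset.sum_sub_distrib]
    refine Finset.sum_congr rfl fun ω _ => ?_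
    cases Y ω <;> simp
  have hHY : Hent μ Y = hb ε := by
    simp only [Hent, Fintype.sum_bool, hT, hF, hb]
    ring
  have hadd : ∀ u, pOf μ V u = pOf μ (fun ω => (V ω, Y ω)) (u, true)
      + pOf μ (fun ω => (V ω, Y ω)) (u, false) := by
    intro u
    unfold pOf
    rw [← Finset.sum_add_distrib]
    refine Finset.sum_congr rfl fun ω _ => ?_
    cases hy : Y ω <;> simp [hy]
  have hjoint : ∀ u, pr μ (fun ω => Y ω = true ∧ V ω = u)
      = pOf μ (fun ω => (V ω, Y ω)) (u, true) := by
    intro u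
    unfold pOf pr
    refine Finset.sum_congr rfl fun ω _ => ?_
    simp [and_comm]
  have key : ∀ u, pOf μ V u * hb δ ≤ pOf μ V u * Real.logb 2 (pOf μ V u)
      - (pOf μ (fun ω => (V ω, Y ω)) (u, true) * Real.logb 2 (pOf μ (fun ω => (V ω, Y ω)) (u, true))
      + pOf μ (fun ω => (V ω, Y ω)) (u, false)
        * Real.logb 2 (pOf μ (fun ω => (V ω, Y ω)) (u, false))) := by
    intro u
    have h1 := hb1 u
    have h2 := hb2 u
    have h3 := hadd u
    rw [hjoint] at h1 h2
    change δ * pOf μ V u ≤ _ at h1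
    change _ ≤ (1 - δ) * pOf μ V u at h2
    have hm : 0 ≤ pOf μ V u := Finset.sum_nonneg fun ω _ => by
      split_ifs
      · exact hμ ω
      · exact le_rfl
    generalize pOf μ V u = m at *
    generalize pOf μ (fun ω => (V ω, Y ω)) (u, true) = a at *
    generalize pOf μ (fun ω => (V ω, Y ω)) (u, false) = b at *
    rcases hm.eq_or_lt with h0 | h0
    · subst h0
      have ha : a = 0 := by linarith
      have hb : b = 0 := by linarith
      simp [ha, hb]
    · have ha : 0 < a := by nlinarith
      have hbb : 0 < b := by nlinarith
      have hq := hmono (a / m) (by rwa [le_div_iff₀ h0]) (by rwa [div_le_iff₀ h0])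
      have hq' := mul_le_mul_of_nonneg_left hq h0.le
      refine hq'.trans (le_of_eq ?_)
      have e1 : 1 - a / m = b / m := by field_simp; linarith
      rw [hb, e1, Real.logb_div ha.ne' h0.ne', Real.logb_div hbb.ne' h0.ne']
      field_simp
      rw [h3]
      ring
  have hsum := Finset.sum_le_sum fun u (_ : u ∈ Finset.univ) => key u
  rw [← Finset.sum_mul, hVsum, Finset.sum_sub_distrib] at hsum
  unfold Iinfo
  rw [hHY]
  simp only [Hent, Fintype.sum_prod_type, Fintype.sum_bool]
  linarith

/-- Converse for the noiseless-feedback rewrite channel with crossover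
`0 < ε ≤ 1/2`: for an arbitrary finite-valued `U`, an encoder `X₁` that is a (randomized)
function of `U` and local randomness `w`, and a rewrite map `X₂` depending on `(w, Y₁)`
(all local randomness `w ~ ν` independent of the channel noises `E₁, E₂ ~ Bern(ε)`),
one has `ε² ≤ P(Y₂=1 | U=u) ≤ 1−ε²` for all `u` with `P(U=u) > 0`; consequently,
if `P(Y₂=1) = ε` then `I(U;Y₂) ≤ h_b(ε) − h_b(ε²)`. -/
theorem stmt7 {W 𝒰 : Type*} [Fintype W] [Fintype 𝒰]
    (ε : ℝ) (hε0 : 0 < ε) (hε1 : ε ≤ 1 / 2)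
    (ν : W → ℝ) (hν0 : ∀ w, 0 ≤ ν w) (hν1 : ∑ w, ν w = 1)
    (U : W → 𝒰) (X1 : W → Bool) (X2 : W → Bool → Option Bool) :
    let μ : W × Bool × Bool → ℝ :=
      fun ω => ν ω.1 * bern ε ω.2.1 * bern ε ω.2.2
    let Uv : W × Bool × Bool → 𝒰 := fun ω => U ω.1
    let Y1 : W × Bool × Bool → Bool := fun ω => Bool.xor (X1 ω.1) ω.2.1
    let Y2 : W × Bool × Bool → Bool :=
      fun ω => match X2 ω.1 (Y1 ω) with
        | none => Y1 ω
        | some b => Bool.xor b ω.2.2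
    (∀ u : 𝒰, pr μ (fun ω => Uv ω = u) ≠ 0 →
        ε ^ 2 ≤ pr μ (fun ω => Y2 ω = true ∧ Uv ω = u) / pr μ (fun ω => Uv ω = u)
        ∧ pr μ (fun ω => Y2 ω = true ∧ Uv ω = u) / pr μ (fun ω => Uv ω = u) ≤ 1 - ε ^ 2)
    ∧ (pr μ (fun ω => Y2 ω = true) = ε → Iinfo μ Uv Y2 ≤ hb ε - hb (ε ^ 2)) := by
  intro μ Uv Y1 Y2
  have hμ : ∀ ω, 0 ≤ μ ω := by
    intro ω
    refine mul_nonneg (mul_nonneg (hν0 _) ?_) ?_ <;>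
    · unfold bern
      split_ifs <;> linarith
  have hsumb : ∀ f : W × Bool × Bool → ℝ, ∑ ω, f ω = ∑ w, (f (w, true, true) + f (w, true, false)
      + (f (w, false, true) + f (w, false, false))) := by
    intro f
    simp only [Fintype.sum_prod_type, Fintype.sum_bool]
  have hs : ∑ ω, μ ω = 1 := by
    rw [hsumb, ← hν1]
    refine Finset.sum_congr rfl fun w _ => ?_
    simp [μ, bern]
    ring
  have hε2 : ε ^ 2 ≤ 1 / 2 := by nlinarith
  have hlow : ∀ u, ε ^ 2 * pr μ (fun ω => Uv ω = u)
        ≤ pr μ (fun ω => Y2 ω = true ∧ Uv ω = u)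
      ∧ pr μ (fun ω => Y2 ω = true ∧ Uv ω = u) ≤ (1 - ε ^ 2) * pr μ (fun ω => Uv ω = u) := by
    intro u
    unfold pr
    rw [hsumb, hsumb, Finset.mul_sum, Finset.mul_sum]
    have hw : ∀ w, 0 ≤ ν w * (1 - 2 * ε) ∧ 0 ≤ ν w * ε ∧ 0 ≤ ν w * ε ^ 2
        ∧ 0 ≤ ν w * ε * (1 - 2 * ε) := fun w => by
      have h0 := hν0 w
      have h1 : 0 ≤ 1 - 2 * ε := by linarith
      refine ⟨?_, ?_, ?_, ?_⟩ <;> positivity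
    constructor <;> refine Finset.sum_le_sum fun w _ => ?_
    all_goals
      obtain ⟨h1, h2, h3, h4⟩ := hw w
      by_cases hu : U w = u
      · rcases hx : X1 w with _ | _ <;> rcases ht : X2 w true with _ | _ | _ <;>
          rcases hf : X2 w false with _ | _ | _ <;>
          simp [μ, Uv, Y1, Y2, bern, hu, hx, ht, hf] <;> nlinarith
      · simp [Uv, hu]
  refine ⟨fun u hu => ?_, fun h => ?_⟩
  · have hpos : 0 < pr μ (fun ω => Uv ω = u) := by
      refine lt_of_le_of_ne (Finset.sum_nonneg fun ω _ => ?_) hu.symm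
      split_ifs
      · exact hμ ω
      · exact le_rfl
    rw [le_div_iff₀ hpos, div_le_iff₀ hpos]
    exact hlow u
  · exact info_bound μ Uv Y2 hμ hs (ε ^ 2) ε (by positivity) hε2 (fun u => (hlow u).1)
      (fun u => (hlow u).2) h
end

section
/- Let 0 < ε ≤ 1/2 and 0 ≤ δ ≤ 1/2, and set p = εδ(2−ε) + ε²(1−δ). Over the noisy-feedback rewrite channel with parameters (ε, δ), let U be any finite-valued random variable, let X₁ ∈ {0,1} be a (possibly randomized) function of U, and let X₂ ∈ {no-rewrite, 0, 1} be a (possibly randomized) function of (U, X₁, T), with all local randomness independent of the channel noises. Then p ≤ 1/2, and for every u with P(U = u) > 0, p ≤ P(Y₂ = 1 | U = u) ≤ 1 − p. Consequently, if P(Y₂ = 1) = ε, then I(U; Y₂) ≤ h_b(ε) − h_b(εδ(2−ε) + ε²(1−δ)). -/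
open Classical

noncomputable def yTwo (x1 : Bool) (x2 : Bool → Option Bool) (n : Bool × Bool × Bool) : Bool :=
  (x2 (Bool.xor (Bool.xor x1 n.1) n.2.1)).elim (Bool.xor x1 n.1) (fun b => Bool.xor b n.2.2)

set_option maxHeartbeats 4000000 in
lemma core_bound (ε δ : ℝ) (hε0 : 0 < ε) (hε1 : ε ≤ 1 / 2) (hδ0 : 0 ≤ δ) (hδ1 : δ ≤ 1 / 2)
    (x1 : Bool) (x2 : Bool → Option Bool) :
    ε * δ * (2 - ε) + ε ^ 2 * (1 - δ) ≤
      ∑ n : Bool × Bool × Bool, (if yTwo x1 x2 n = true then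
        bern ε n.1 * bern δ n.2.1 * bern ε n.2.2 else 0) ∧
    ∑ n : Bool × Bool × Bool, (if yTwo x1 x2 n = true then
        bern ε n.1 * bern δ n.2.1 * bern ε n.2.2 else 0) ≤
      1 - (ε * δ * (2 - ε) + ε ^ 2 * (1 - δ)) := by
  have q : 0 ≤ 1 - 2 * ε := by linarith
  have r : 0 ≤ 1 - 2 * δ := by linarith
  have h0 := hε0.le
  have a1 := mul_nonneg h0 q
  have a2 := mul_nonneg h0 r
  have a3 := mul_nonneg hδ0 q
  have a4 := mul_nonneg hδ0 r
  have a5 := mul_nonneg q r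
  have a6 := mul_nonneg h0 hδ0
  have b1 := mul_nonneg a1 r
  have b2 := mul_nonneg a1 hδ0
  have b3 := mul_nonneg a1 h0
  have b4 := mul_nonneg a1 q
  have b5 := mul_nonneg a6 h0
  have b6 := mul_nonneg a2 h0
  have b7 := mul_nonneg a5 q
  have b8 := mul_nonneg a3 q
  have c1 := mul_nonneg h0 h0
  have c2 := mul_nonneg q q
  rcases x1 with _ | _ <;> rcases h1 : x2 true with _ | _ | _ <;>
    rcases h2 : x2 false with _ | _ | _ <;>
    simp [Fintype.sum_prod_type, yTwo, h1, h2, bern] <;> constructor <;> nlinarith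

lemma hb_eq (x : ℝ) : hb x = Real.binEntropy x / Real.log 2 := by
  rw [hb, Real.binEntropy_eq_negMulLog_add_negMulLog_one_sub, Real.negMulLog, Real.negMulLog,
    Real.logb, Real.logb]
  ring

lemma hb_mono (p q : ℝ) (hp0 : 0 ≤ p) (hp : p ≤ 1 / 2) (h1 : p ≤ q) (h2 : q ≤ 1 - p) :
    hb p ≤ hb q := by
  rw [hb_eq, hb_eq]
  apply div_le_div_of_nonneg_right _ (Real.log_nonneg (by norm_num))
  have hm := Real.binEntropy_strictMonoOn.monotoneOn
  rcases le_total q (1 / 2) with h | h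
  · exact hm ⟨hp0, by linarith⟩ ⟨by linarith, by linarith⟩ h1
  · rw [← Real.binEntropy_one_sub q]
    exact hm ⟨hp0, by linarith⟩ ⟨by linarith, by linarith⟩ (by linarith)

lemma split_ent (c d : ℝ) (hc : 0 ≤ c) (hd : 0 ≤ d) (h : c + d ≠ 0) :
    (c + d) * hb (c / (c + d)) =
      (c + d) * Real.logb 2 (c + d) - c * Real.logb 2 c - d * Real.logb 2 d := by
  have h1 : 1 - c / (c + d) = d / (c + d) := by field_simp; ring
  rw [hb, h1]
  have key : ∀ x : ℝ, (c + d) * (x / (c + d) * Real.logb 2 (x / (c + d))) =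
      x * Real.logb 2 x - x * Real.logb 2 (c + d) := by
    intro x
    by_cases hx : x = 0
    · simp [hx]
    · rw [Real.logb_div hx h]; field_simp
  have := key c
  have := key d
  linarith

/-- Converse for the noisy-feedback rewrite channel with parameters
`(ε, δ)`, `0 < ε ≤ 1/2`, `0 ≤ δ ≤ 1/2`, and `p = εδ(2−ε) + ε²(1−δ)`: for an arbitrary
finite-valued `U`, encoder `X₁` depending on the local randomness `w`, and rewrite map
`X₂` depending on `(w, T)` (with `w ~ ν` independent of the noises
`E₁ ~ Bern(ε)`, `E′ ~ Bern(δ)`, `E₂ ~ Bern(ε)`), one has `p ≤ 1/2` and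
`p ≤ P(Y₂=1 | U=u) ≤ 1−p` for all `u` with `P(U=u) > 0`; consequently, if
`P(Y₂=1) = ε` then `I(U;Y₂) ≤ h_b(ε) − h_b(εδ(2−ε)+ε²(1−δ))`. -/
theorem stmt10 {W 𝒰 : Type*} [Fintype W] [Fintype 𝒰]
    (ε δ : ℝ) (hε0 : 0 < ε) (hε1 : ε ≤ 1 / 2) (hδ0 : 0 ≤ δ) (hδ1 : δ ≤ 1 / 2)
    (ν : W → ℝ) (hν0 : ∀ w, 0 ≤ ν w) (hν1 : ∑ w, ν w = 1)
    (U : W → 𝒰) (X1 : W → Bool) (X2 : W → Bool → Option Bool) :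
    let p : ℝ := ε * δ * (2 - ε) + ε ^ 2 * (1 - δ)
    let μ : W × Bool × Bool × Bool → ℝ :=
      fun ω => ν ω.1 * bern ε ω.2.1 * bern δ ω.2.2.1 * bern ε ω.2.2.2
    let Uv : W × Bool × Bool × Bool → 𝒰 := fun ω => U ω.1
    let Y1 : W × Bool × Bool × Bool → Bool := fun ω => Bool.xor (X1 ω.1) ω.2.1
    let T : W × Bool × Bool × Bool → Bool := fun ω => Bool.xor (Y1 ω) ω.2.2.1
    let Y2 : W × Bool × Bool × Bool → Bool :=
      fun ω => match X2 ω.1 (T ω) with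
        | none => Y1 ω
        | some b => Bool.xor b ω.2.2.2
    p ≤ 1 / 2
    ∧ (∀ u : 𝒰, pr μ (fun ω => Uv ω = u) ≠ 0 →
        p ≤ pr μ (fun ω => Y2 ω = true ∧ Uv ω = u) / pr μ (fun ω => Uv ω = u)
        ∧ pr μ (fun ω => Y2 ω = true ∧ Uv ω = u) / pr μ (fun ω => Uv ω = u) ≤ 1 - p)
    ∧ (pr μ (fun ω => Y2 ω = true) = ε →
        Iinfo μ Uv Y2 ≤ hb ε - hb (ε * δ * (2 - ε) + ε ^ 2 * (1 - δ))) := by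
  
  intro p μ Uv Y1 T Y2
  have hp0 : 0 ≤ p := by
    have : 0 ≤ ε * δ * (2 - ε) := mul_nonneg (mul_nonneg hε0.le hδ0) (by linarith)
    have : 0 ≤ ε ^ 2 * (1 - δ) := mul_nonneg (sq_nonneg _) (by linarith)
    show 0 ≤ ε * δ * (2 - ε) + ε ^ 2 * (1 - δ)
    linarith
  set F : W → ℝ := fun w => ∑ n : Bool × Bool × Bool, (if yTwo (X1 w) (X2 w) n = true then
        bern ε n.1 * bern δ n.2.1 * bern ε n.2.2 else 0) with hF
  have hcore : ∀ w, p ≤ F w ∧ F w ≤ 1 - p := fun w =>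
    core_bound ε δ hε0 hε1 hδ0 hδ1 (X1 w) (X2 w)
  have hY : ∀ w n, Y2 (w, n) = yTwo (X1 w) (X2 w) n := by
    intro w n
    simp only [Y2, T, Y1, yTwo]
    cases X2 w (Bool.xor (Bool.xor (X1 w) n.1) n.2.1) <;> rfl
  have hμ0 : ∀ ω, 0 ≤ μ ω := by
    have hb : ∀ x : ℝ, 0 ≤ x → x ≤ 1 / 2 → ∀ b, 0 ≤ bern x b := by
      intro x h0 h1 b
      cases b <;> simp [bern] <;> linarith
    intro ω
    exact mul_nonneg (mul_nonneg (mul_nonneg (hν0 _) (hb _ hε0.le hε1 _)) (hb _ hδ0 hδ1 _))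
      (hb _ hε0.le hε1 _)
  have hn1 : ∑ n : Bool × Bool × Bool, bern ε n.1 * bern δ n.2.1 * bern ε n.2.2 = 1 := by
    simp [Fintype.sum_prod_type, bern]; ring
  have hμn : ∀ w n, μ (w, n) = ν w * (bern ε n.1 * bern δ n.2.1 * bern ε n.2.2) := by
    intro w n; show ν w * _ * _ * _ = _; ring
  have hA : ∀ u, pr μ (fun ω => Uv ω = u) = ∑ w, if U w = u then ν w else 0 := by
    intro u
    unfold pr
    rw [Fintype.sum_prod_type]
    refine Finset.sum_congr rfl fun w _ => ?_
    by_cases h : U w = u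
    · have : ∀ n, Uv (w, n) = u := fun n => h
      simp only [this, h, if_true, hμn]
      rw [← Finset.mul_sum, hn1, mul_one]
    · have : ∀ n, ¬ Uv (w, n) = u := fun n => h
      simp [this, h]
  have hC : ∀ u, pr μ (fun ω => Y2 ω = true ∧ Uv ω = u) =
      ∑ w, if U w = u then ν w * F w else 0 := by
    intro u
    unfold pr
    rw [Fintype.sum_prod_type]
    refine Finset.sum_congr rfl fun w _ => ?_
    by_cases h : U w = u
    · have : ∀ n, Uv (w, n) = u := fun n => h
      simp only [this, h, if_true, and_true, hμn, hY, hF]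
      rw [Finset.mul_sum]
      refine Finset.sum_congr rfl fun n _ => ?_
      split_ifs <;> simp
    · have : ∀ n, ¬ Uv (w, n) = u := fun n => h
      simp [this, h]
  have hAnn : ∀ u, 0 ≤ pr μ (fun ω => Uv ω = u) := by
    intro u
    exact Finset.sum_nonneg fun ω _ => by split_ifs <;> simp [hμ0]
  have hlo : ∀ u, p * pr μ (fun ω => Uv ω = u) ≤ pr μ (fun ω => Y2 ω = true ∧ Uv ω = u) := by
    intro u
    rw [hA, hC, Finset.mul_sum]
    refine Finset.sum_le_sum fun w _ => ?_
    split_ifs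
    · nlinarith [hν0 w, (hcore w).1]
    · simp
  have hhi : ∀ u, pr μ (fun ω => Y2 ω = true ∧ Uv ω = u) ≤
      (1 - p) * pr μ (fun ω => Uv ω = u) := by
    intro u
    rw [hA, hC, Finset.mul_sum]
    refine Finset.sum_le_sum fun w _ => ?_
    split_ifs
    · nlinarith [hν0 w, (hcore w).2]
    · simp
  have hp : p ≤ 1 / 2 := by
    have h := core_bound ε δ hε0 hε1 hδ0 hδ1 true (fun _ => none)
    have h' := h.1.trans h.2
    show ε * δ * (2 - ε) + ε ^ 2 * (1 - δ) ≤ 1 / 2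
    linarith
  have hmid : ∀ u : 𝒰, pr μ (fun ω => Uv ω = u) ≠ 0 →
        p ≤ pr μ (fun ω => Y2 ω = true ∧ Uv ω = u) / pr μ (fun ω => Uv ω = u)
        ∧ pr μ (fun ω => Y2 ω = true ∧ Uv ω = u) / pr μ (fun ω => Uv ω = u) ≤ 1 - p := by
    intro u hu
    have hpos := lt_of_le_of_ne (hAnn u) (Ne.symm hu)
    exact ⟨(le_div_iff₀ hpos).2 (hlo u), (div_le_iff₀ hpos).2 (hhi u)⟩
  refine ⟨hp, hmid, ?_⟩
  intro hYε
  show Iinfo μ Uv Y2 ≤ hb ε - hb p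
  have hμ1 : ∑ ω, μ ω = 1 := by
    rw [Fintype.sum_prod_type, ← hν1]
    refine Finset.sum_congr rfl fun w _ => ?_
    simp only [hμn]
    rw [← Finset.mul_sum, hn1, mul_one]
  have hYt : pOf μ Y2 true = ε := hYε
  have hYf : pOf μ Y2 false = 1 - ε := by
    rw [← hYt, ← hμ1]
    unfold pOf
    rw [← Finset.sum_sub_distrib]
    refine Finset.sum_congr rfl fun ω _ => ?_
    cases Y2 ω <;> simp
  have hHY : Hent μ Y2 = hb ε := by
    rw [Hent, Fintype.sum_bool, hYt, hYf, hb]; ring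
  have hAsum : ∑ u, pOf μ Uv u = 1 := by
    unfold pOf
    rw [Finset.sum_comm, ← hμ1]
    refine Finset.sum_congr rfl fun ω _ => ?_
    simp
  have hct : ∀ u, pOf μ (fun ω => (Uv ω, Y2 ω)) (u, true) =
      pr μ (fun ω => Y2 ω = true ∧ Uv ω = u) := by
    intro u
    unfold pOf pr
    refine Finset.sum_congr rfl fun ω _ => ?_
    by_cases h1 : Uv ω = u <;> by_cases h2 : Y2 ω = true <;> simp [h1, h2]
  have hcd : ∀ u, pOf μ Uv u = pOf μ (fun ω => (Uv ω, Y2 ω)) (u, true) +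
      pOf μ (fun ω => (Uv ω, Y2 ω)) (u, false) := by
    intro u
    unfold pOf
    rw [← Finset.sum_add_distrib]
    refine Finset.sum_congr rfl fun ω _ => ?_
    by_cases h1 : Uv ω = u <;> by_cases h2 : Y2 ω = true <;> simp [h1, h2]
  have hnn : ∀ x, 0 ≤ pOf μ (fun ω => (Uv ω, Y2 ω)) x := by
    intro x
    exact Finset.sum_nonneg fun ω _ => by split_ifs <;> simp [hμ0]
  have hu : ∀ u, pOf μ Uv u * hb p ≤ pOf μ Uv u * Real.logb 2 (pOf μ Uv u) -
      (pOf μ (fun ω => (Uv ω, Y2 ω)) (u, true) *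
        Real.logb 2 (pOf μ (fun ω => (Uv ω, Y2 ω)) (u, true)) +
      pOf μ (fun ω => (Uv ω, Y2 ω)) (u, false) *
        Real.logb 2 (pOf μ (fun ω => (Uv ω, Y2 ω)) (u, false))) := by
    intro u
    have e := hcd u
    have ht := hnn (u, true)
    have hf := hnn (u, false)
    have hm := hmid u
    rw [← hct u] at hm
    change pOf μ Uv u ≠ 0 → p ≤ _ / pOf μ Uv u ∧ _ / pOf μ Uv u ≤ 1 - p at hm
    generalize pOf μ (fun ω => (Uv ω, Y2 ω)) (u, true) = c at *
    generalize pOf μ (fun ω => (Uv ω, Y2 ω)) (u, false) = d at *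
    generalize pOf μ Uv u = a at *
    subst e
    by_cases h0 : c + d = 0
    · have hc : c = 0 := by linarith
      have hd : d = 0 := by linarith
      simp [hc, hd]
    · obtain ⟨h1, h2⟩ := hm h0
      have := split_ent c d ht hf h0
      have := mul_le_mul_of_nonneg_left (hb_mono p _ hp0 hp h1 h2) (add_nonneg ht hf)
      linarith
  have hs := Finset.sum_le_sum (s := Finset.univ) fun u _ => hu u
  rw [← Finset.sum_mul, hAsum, Finset.sum_sub_distrib] at hs
  rw [Iinfo, hHY, Hent, Hent, Fintype.sum_prod_type]
  simp only [Fintype.sum_bool]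
  linarith
end
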